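/- Let u₁,...,u_{N−1} : Ω → ℝ^d be bounded vector fields, let S : Ω̄ → Ω̄ be a μ-measure-preserving map with S^N = Id μ-a.e., let μ be a Borel probability measure on Ω absolutely continuous with respect to Lebesgue measure, and let H : ℝ^d × (ℝ^d)^{N−1} → ℝ be a Lipschitz function such that: (i) H(·, Y) is concave for every Y ∈ (ℝ^d)^{N−1} and H(x, ·) is convex for every x ∈ ℝ^d; (ii) H is N-sub-antisymmetric on Ω̄^N, i.e. Σ_{i=0}^{N−1} H(σ^i(x₁,...,x_N)) ≤ 0 on Ω̄^N and H(x,...,x) = 0; (iii) ∫_Ω H(x, Sx, ..., S^{N−1}x) dμ(x) = 0; and (iv) (u₁(x),...,u_{N−1}(x)) ∈ ∂_{2,...,N} H(x, Sx, ..., S^{N−1}x) for μ-a.e. x ∈ Ω. If either S ∈ W^{1,1}_loc(Ω) or u_i ∈ W^{1,1}_loc(Ω) for all i = 1,...,N−1, then there exists a set Ω₀ ⊂ Ω of full μ-measure such that for every x ∈ Ω₀ the partial gradients ∇_i H(x, Sx, ..., S^{N−1}x) exist for all i = 1,...,N. -/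

import Mathlib

/- STATEMENT 19: Theorem 7.1 (Appendix: a.e. existence of all partial gradients of the
Hamiltonian along the orbit of the involution).  Paper's `N` is formalized as `N + 1`,
so the `N−1` vector fields are `u : Fin N → …` (and `N ≥ 2` becomes `1 ≤ N`).
Membership in `W^{1,1}_loc(Ω)` is encoded through the existence of a locally integrable
weak derivative. -/

open MeasureTheory Filter Set Function
open scoped RealInnerProductSpace Topology ENNReal

noncomputable section

abbrev Euc (d : ℕ) : Type := EuclideanSpace ℝ (Fin d)

/-- The cyclic shift `σ(x₁,…,x_N) = (x₂,…,x_N,x₁)`. -/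
def cyc {n : ℕ} {α : Type*} (x : Fin n → α) : Fin n → α :=
  fun i => x ⟨(i.1 + 1) % n, Nat.mod_lt _ i.pos⟩

/-- `H` is `N`-sub-antisymmetric on `A`. -/
def SubAnti {d N : ℕ} (A : Set (Euc d)) (H : (Fin (N + 1) → Euc d) → ℝ) : Prop :=
  (∀ x : Fin (N + 1) → Euc d, (∀ i, x i ∈ A) →
    ∑ i : Fin (N + 1), H (cyc^[i.1] x) ≤ 0) ∧
  ∀ z ∈ A, H (fun _ => z) = 0

/-- `H(·, y)` is concave for every fixed tail `y`. -/
def ConcaveFirst {d N : ℕ} (H : (Fin (N + 1) → Euc d) → ℝ) : Prop :=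
  ∀ y : Fin N → Euc d, ConcaveOn ℝ univ fun z : Euc d => H (Fin.cons z y)

/-- `H(x, ·)` is jointly convex in the last `N−1` variables for every fixed `x`. -/
def ConvexTail {d N : ℕ} (H : (Fin (N + 1) → Euc d) → ℝ) : Prop :=
  ∀ z : Euc d, ConvexOn ℝ univ fun y : Fin N → Euc d => H (Fin.cons z y)

/-- `u ∈ W^{1,1}_loc(Ω; ℝ^d)`: locally integrable with a locally integrable weak
derivative on `Ω`. -/
def MemW11loc {d : ℕ} (Ω : Set (Euc d)) (u : Euc d → Euc d) : Prop :=
  LocallyIntegrableOn u Ω volume ∧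
  ∃ Du : Euc d → (Euc d →L[ℝ] Euc d),
    AEStronglyMeasurable Du (volume.restrict Ω) ∧
    LocallyIntegrableOn (fun x => ‖Du x‖) Ω volume ∧
    ∀ φ : Euc d → ℝ, ContDiff ℝ (⊤ : ℕ∞) φ → HasCompactSupport φ → tsupport φ ⊆ Ω →
      ∀ v : Euc d, ∫ x in Ω, fderiv ℝ φ x v • u x = - ∫ x in Ω, φ x • Du x v

/-- The set `s` has (outer) Lebesgue density one at `x`. -/
def DensityOne {d : ℕ} (s : Set (Euc d)) (x : Euc d) : Prop :=
  Tendsto (fun r => volume (s ∩ Metric.closedBall x r) / volume (Metric.closedBall x r))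
    (𝓝[>] 0) (𝓝 1)

theorem ae_densityOne {d : ℕ} (s : Set (Euc d)) : ∀ᵐ x, x ∈ s → DensityOne s x :=
  ae_imp_of_ae_restrict (Besicovitch.ae_tendsto_measure_inter_div volume s)

/-- A Lipschitz function bounded below to first order along a set of density one is bounded below
to first order along every ray. -/
theorem eventually_ge_along_ray {d : ℕ} {G : Euc d → ℝ} {C : NNReal} (hG : LipschitzWith C G)
    {x : Euc d} {L : Euc d →L[ℝ] ℝ}
    (h : ∀ ε > 0, ∃ E : Set (Euc d), DensityOne E x ∧
      ∀ᶠ z in 𝓝[E] x, G x + L (z - x) - ε * ‖z - x‖ ≤ G z)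
    (v : Euc d) {ε : ℝ} (hε : 0 < ε) :
    ∀ᶠ r : ℝ in 𝓝[>] 0, G x + r * L v - ε * r ≤ G (x + r • v) := by
  obtain ⟨δ, hδ, hδ1, hδε⟩ : ∃ δ > 0, δ ≤ 1 ∧ δ * (C + ‖L‖ + ‖v‖ + 1) ≤ ε := by
    have hpos : 0 < (C : ℝ) + ‖L‖ + ‖v‖ + 1 := by positivity
    refine ⟨min 1 (ε / (C + ‖L‖ + ‖v‖ + 1)), by positivity, min_le_left _ _, ?_⟩
    calc _ ≤ ε / (C + ‖L‖ + ‖v‖ + 1) * (C + ‖L‖ + ‖v‖ + 1) := by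
          gcongr; exact min_le_right _ _
      _ = ε := by field_simp
  obtain ⟨E, hE, hlow⟩ := h δ hδ
  rw [eventually_nhdsWithin_iff, Metric.eventually_nhds_iff] at hlow
  obtain ⟨ρ, hρ, hlow⟩ := hlow
  have hne := Measure.eventually_nonempty_inter_smul_of_density_one volume E x hE
    (Metric.ball v δ) measurableSet_ball (Metric.measure_ball_pos _ _ hδ).ne'
  have hsmall : ∀ᶠ r : ℝ in 𝓝[>] 0, r < ρ / (‖v‖ + 1) :=
    eventually_nhdsWithin_of_eventually_nhds (eventually_lt_nhds (by positivity))
  filter_upwards [hne, hsmall, self_mem_nhdsWithin] with r hr hrs hr0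
  have hr0 : 0 < r := hr0
  obtain ⟨z, hzE, hz⟩ := hr
  obtain ⟨w, hw, rfl⟩ : ∃ w ∈ Metric.ball v δ, x + r • w = z := by
    rw [Set.singleton_add, Set.mem_image] at hz
    obtain ⟨_, ⟨w, hw, rfl⟩, rfl⟩ := hz
    exact ⟨w, hw, rfl⟩
  have hwv : ‖w - v‖ < δ := by simpa [dist_eq_norm] using hw
  have hwn : ‖w‖ ≤ ‖v‖ + 1 := by
    have := norm_add_le (w - v) v
    simp only [sub_add_cancel] at this
    linarith
  have hzx : x + r • w - x = r • w := by abel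
  have hnorm : ‖r • w‖ = r * ‖w‖ := by rw [norm_smul, Real.norm_of_nonneg hr0.le]
  have hl := hlow (y := x + r • w) (by
    rw [dist_eq_norm, hzx, hnorm]
    rw [lt_div_iff₀ (by positivity)] at hrs
    exact (mul_le_mul_of_nonneg_left hwn hr0.le).trans_lt hrs) hzE
  rw [hzx, hnorm, map_smul, smul_eq_mul] at hl
  have hLip : G (x + r • w) - G (x + r • v) ≤ C * (r * δ) := by
    have h1 := hG.dist_le_mul (x + r • w) (x + r • v)
    rw [dist_eq_norm, Real.norm_eq_abs, dist_eq_norm,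
      show x + r • w - (x + r • v) = r • (w - v) by rw [smul_sub]; abel, norm_smul,
      Real.norm_of_nonneg hr0.le] at h1
    refine (le_abs_self _).trans (h1.trans ?_)
    gcongr
  have hLw : L v - ‖L‖ * δ ≤ L w := by
    have h1 := (le_abs_self _).trans (L.le_opNorm (v - w))
    rw [map_sub, norm_sub_rev] at h1
    linarith [mul_le_mul_of_nonneg_left hwv.le (norm_nonneg L)]
  have h2 : r * (L v - ‖L‖ * δ) ≤ r * L w := by gcongr
  have h3 : δ * (r * ‖w‖) ≤ δ * (r * (‖v‖ + 1)) := by gcongr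
  have h4 : r * (δ * (C + ‖L‖ + ‖v‖ + 1)) ≤ r * ε := by gcongr
  linarith

/-- A concave Lipschitz function which is bounded below to first order along sets of density one
is differentiable. -/
theorem ConcaveOn.hasFDerivAt_of_density {d : ℕ} {G : Euc d → ℝ} (hconc : ConcaveOn ℝ univ G)
    {C : NNReal} (hG : LipschitzWith C G) {x : Euc d} {L : Euc d →L[ℝ] ℝ}
    (h : ∀ ε > 0, ∃ E : Set (Euc d), DensityOne E x ∧
      ∀ᶠ z in 𝓝[E] x, G x + L (z - x) - ε * ‖z - x‖ ≤ G z) :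
    HasFDerivAt G L x := by
  refine hG.hasFDerivAt_of_hasLineDerivAt_of_closure (s := univ) (by simp) fun v _ => ?_
  rw [hasLineDerivAt_iff_isLittleO_nhds_zero, Asymptotics.isLittleO_iff]
  intro ε hε
  have key : ∀ w : Euc d, ∀ᶠ r : ℝ in 𝓝[>] 0, |G (x + r • w) - G x - r * L w| ≤ ε * r := by
    intro w
    filter_upwards [eventually_ge_along_ray hG h w hε, eventually_ge_along_ray hG h (-w) hε]
      with r h1 h2
    have hc := hconc.2 (mem_univ (x + r • w)) (mem_univ (x + r • -w))
      (show (0 : ℝ) ≤ 1 / 2 by norm_num) (show (0 : ℝ) ≤ 1 / 2 by norm_num) (by norm_num)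
    rw [show (1 / 2 : ℝ) • (x + r • w) + (1 / 2 : ℝ) • (x + r • -w) = x by module] at hc
    simp only [smul_eq_mul, map_neg] at hc h2
    rw [abs_le]
    constructor <;> linarith
  have hneg : ∀ᶠ r : ℝ in 𝓝[<] 0, |G (x + r • v) - G x - r * L v| ≤ ε * |r| := by
    have ht : Tendsto (fun r : ℝ => -r) (𝓝[<] 0) (𝓝[>] 0) := by
      simpa using tendsto_neg_nhdsLT (a := (0 : ℝ))
    filter_upwards [ht.eventually (key (-v)), self_mem_nhdsWithin] with r hr hr0
    simpa [abs_of_neg (show r < 0 from hr0)] using hr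
  have hpos : ∀ᶠ r : ℝ in 𝓝[>] 0, |G (x + r • v) - G x - r * L v| ≤ ε * |r| := by
    filter_upwards [key v, self_mem_nhdsWithin] with r hr hr0
    rwa [abs_of_pos (show 0 < r from hr0)]
  have hall : ∀ᶠ r : ℝ in 𝓝[≠] 0, |G (x + r • v) - G x - r * L v| ≤ ε * |r| := by
    rw [← Iio_union_Ioi, nhdsWithin_union]
    exact eventually_sup.2 ⟨hneg, hpos⟩
  rw [eventually_nhdsWithin_iff] at hall
  filter_upwards [hall] with r hr
  by_cases h0 : r = 0
  · simp [h0]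
  · simpa using hr h0

/-- First-order lower bound along `E` supplied by a minorant differentiable within `E`. -/
theorem HasFDerivWithinAt.eventually_ge {d : ℕ} {R : Euc d → ℝ} {E : Set (Euc d)}
    {x : Euc d} {L : Euc d →L[ℝ] ℝ} (hR : HasFDerivWithinAt R L E x) {ε : ℝ} (hε : 0 < ε) :
    ∀ᶠ z in 𝓝[E] x, R x + L (z - x) - ε * ‖z - x‖ ≤ R z := by
  have := (hasFDerivWithinAt_iff_isLittleO.1 hR)
  rw [Asymptotics.isLittleO_iff] at this
  filter_upwards [this hε] with z hz
  rw [Real.norm_eq_abs, abs_le] at hz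
  linarith [hz.1]

/-- If a sum of functions, each with an affine minorant touching at `w₀` and one extra summand `g`
differentiable at `w₀`, has a local maximum at `w₀`, then each of the functions is
differentiable. -/
theorem differentiableAt_of_isLocalMax_sum {E ι : Type*} [NormedAddCommGroup E] [NormedSpace ℝ E]
    {s : Finset ι} {h : ι → E → ℝ} {p : ι → E →L[ℝ] ℝ} {g : E → ℝ} {w₀ : E}
    (hg : DifferentiableAt ℝ g w₀)
    (hp : ∀ k ∈ s, ∀ w, h k w₀ + p k (w - w₀) ≤ h k w)
    (hmax : IsLocalMax (fun w => g w + ∑ k ∈ s, h k w) w₀) {k : ι} (hk : k ∈ s) :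
    DifferentiableAt ℝ (h k) w₀ := by
  set φ : E → ℝ := fun w => g w₀ - g w - ∑ j ∈ s, p j (w - w₀) with hφ
  have hbound : ∀ᶠ w in 𝓝 w₀, h k w - h k w₀ - p k (w - w₀) ≤ φ w := by
    filter_upwards [hmax] with w hw
    have h1 : h k w - h k w₀ - p k (w - w₀) ≤ ∑ j ∈ s, (h j w - h j w₀ - p j (w - w₀)) :=
      Finset.single_le_sum (f := fun j => h j w - h j w₀ - p j (w - w₀))
        (fun j hj => by linarith [hp j hj w]) hk
    simp only [Finset.sum_sub_distrib] at h1
    simp only [hφ]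
    linarith
  have hφ0 : φ w₀ = 0 := by simp [hφ]
  have hφmin : IsLocalMin φ w₀ := by
    filter_upwards [hbound] with w hw
    linarith [hp k hk w]
  have hφd : HasFDerivAt φ (0 : E →L[ℝ] ℝ) w₀ := by
    have hd : DifferentiableAt ℝ φ w₀ := by
      simp only [hφ]
      fun_prop
    simpa [hφmin.fderiv_eq_zero] using hd.hasFDerivAt
  refine HasFDerivAt.differentiableAt (f' := p k) ?_
  rw [hasFDerivAt_iff_isLittleO] at hφd ⊢
  refine (Asymptotics.IsBigO.of_bound 1 ?_).trans_isLittleO hφd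
  filter_upwards [hbound] with w hw
  have h0 := hp k hk w
  simp only [hφ0, sub_zero, zero_apply, one_mul, Real.norm_eq_abs]
  rw [abs_of_nonneg (by linarith), abs_of_nonneg (by linarith)]
  exact hw

theorem integrableOn_smul_of_tsupport_subset {d : ℕ} {F : Type*}
    [NormedAddCommGroup F] [NormedSpace ℝ F] {Ω : Set (Euc d)} {g : Euc d → F}
    (hg : LocallyIntegrableOn g Ω volume) {θ : Euc d → ℝ} (hθ : Continuous θ)
    (hc : HasCompactSupport θ) (hs : tsupport θ ⊆ Ω) :
    IntegrableOn (fun z => θ z • g z) Ω volume := by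
  have h1 : IntegrableOn (fun z => θ z • g z) (tsupport θ) volume :=
    (hg.integrableOn_compact_subset hs hc).continuousOn_smul hθ.continuousOn hc
  refine Integrable.integrableOn ((integrableOn_iff_integrable_of_support_subset ?_).1 h1)
  intro z hz
  refine subset_tsupport θ fun h0 => hz ?_
  simp [h0]

/-- A smooth kernel supported in the ball of radius two. -/
structure IsKernel {d : ℕ} (η : Euc d → ℝ) : Prop where
  contDiff : ContDiff ℝ (⊤ : ℕ∞) η
  tsupport_subset : tsupport η ⊆ Metric.closedBall 0 2

/-- The rescaled kernel `z ↦ t⁻ᵈ η ((z - x) / t)`. -/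
def scaled {d : ℕ} (η : Euc d → ℝ) (x : Euc d) (t : ℝ) (z : Euc d) : ℝ :=
  (t⁻¹) ^ d * η (t⁻¹ • (z - x))

/-- The divergence of the vector field `y ↦ η y • y`. -/
def radialDiv {d : ℕ} (η : Euc d → ℝ) (y : Euc d) : ℝ := d * η y + fderiv ℝ η y y

namespace IsKernel

variable {d : ℕ} {η : Euc d → ℝ}

theorem eq_zero (hη : IsKernel η) {y : Euc d} (hy : 2 < ‖y‖) : η y = 0 := by
  by_contra h
  have := hη.tsupport_subset (subset_tsupport η h)
  simp at this
  linarith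

theorem radialDiv_eq_zero (hη : IsKernel η) {y : Euc d} (hy : 2 < ‖y‖) : radialDiv η y = 0 := by
  have h : fderiv ℝ η y = 0 := by
    by_contra h
    have := hη.tsupport_subset (support_fderiv_subset ℝ h)
    simp at this
    linarith
  simp [radialDiv, h, hη.eq_zero hy]

theorem continuous_radialDiv (hη : IsKernel η) : Continuous (radialDiv η) := by
  have h1 := hη.contDiff.continuous
  have h2 : Continuous (fderiv ℝ η) := hη.contDiff.continuous_fderiv (by simp)
  unfold radialDiv
  fun_prop

theorem exists_radialDiv_bound (hη : IsKernel η) : ∃ M, 0 ≤ M ∧ ∀ y, |radialDiv η y| ≤ M := by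
  have hc : HasCompactSupport (radialDiv η) :=
    HasCompactSupport.intro (isCompact_closedBall (0 : Euc d) 2) fun y hy =>
      hη.radialDiv_eq_zero (by simpa using hy)
  obtain ⟨M, hM⟩ := hc.exists_bound_of_continuous hη.continuous_radialDiv
  exact ⟨M, (norm_nonneg _).trans (hM 0), hM⟩

theorem hasDerivAt_scaled (hη : IsKernel η) (x z : Euc d) {t : ℝ} (ht : t ≠ 0) :
    HasDerivAt (fun t => scaled η x t z)
      (-((t⁻¹) ^ (d + 1) * radialDiv η (t⁻¹ • (z - x)))) t := by
  have hinv : HasDerivAt (fun t : ℝ => t⁻¹) (-(t⁻¹) ^ 2) t := by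
    simpa using hasDerivAt_inv ht
  have hd : HasFDerivAt η (fderiv ℝ η (t⁻¹ • (z - x))) (t⁻¹ • (z - x)) :=
    (hη.contDiff.differentiable (by simp) _).hasFDerivAt
  have h1 : HasDerivAt (fun t : ℝ => η (t⁻¹ • (z - x))) _ t :=
    hd.comp_hasDerivAt t (hinv.smul_const (z - x))
  refine ((hinv.pow d).mul h1).congr_deriv ?_
  rcases d with _ | d
  · simp [radialDiv, neg_smul]
    ring
  · simp only [radialDiv, map_smul, smul_eq_mul, Nat.add_sub_cancel, Pi.pow_apply]
    ring

theorem norm_scale_gt {x z : Euc d} {t R : ℝ} (ht : 0 < t) (htR : 2 * t ≤ R)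
    (hz : z ∉ Metric.closedBall x R) : 2 < ‖t⁻¹ • (z - x)‖ := by
  rw [Metric.mem_closedBall, not_le, dist_eq_norm] at hz
  rw [norm_smul, norm_inv, Real.norm_of_nonneg ht.le, ← div_eq_inv_mul, lt_div_iff₀ ht]
  linarith

theorem hasDerivAt_integral_scaled (hη : IsKernel η) {Ω : Set (Euc d)} {f : Euc d → Euc d}
    (hf : LocallyIntegrableOn f Ω volume) {x : Euc d} {R : ℝ} (hR : Metric.closedBall x R ⊆ Ω)
    {t₀ : ℝ} (ht₀ : 0 < t₀) (ht₀R : 2 * t₀ < R) :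
    HasDerivAt (fun t => ∫ z in Ω, scaled η x t z • f z)
      (∫ z in Ω, (-((t₀⁻¹) ^ (d + 1) * radialDiv η (t₀⁻¹ • (z - x)))) • f z) t₀ := by
  obtain ⟨M, hM0, hM⟩ := hη.exists_radialDiv_bound
  have hfm : AEStronglyMeasurable f (volume.restrict Ω) := hf.aestronglyMeasurable
  have hηc := hη.contDiff.continuous
  have hfi : IntegrableOn f (Metric.closedBall x R) volume :=
    hf.integrableOn_compact_subset hR (isCompact_closedBall x R)
  have hKc : ∀ t, Continuous (scaled η x t) := fun t => by unfold scaled; fun_prop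
  refine (hasDerivAt_integral_of_dominated_loc_of_deriv_le
    (s := Ioo (t₀ / 2) (R / 2))
    (bound := (Metric.closedBall x R).indicator fun z => ((t₀ / 2)⁻¹ ^ (d + 1) * M) * ‖f z‖)
    (F := fun t z => scaled η x t z • f z)
    (F' := fun t z => (-((t⁻¹) ^ (d + 1) * radialDiv η (t⁻¹ • (z - x)))) • f z)
    (Ioo_mem_nhds (by linarith) (by linarith)) ?_ ?_ ?_ ?_ ?_ ?_).2
  · exact Eventually.of_forall fun t => (hKc t).aestronglyMeasurable.smul hfm
  · have hts : tsupport (scaled η x t₀) ⊆ Metric.closedBall x R := by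
      refine closure_minimal (fun z hz => ?_) Metric.isClosed_closedBall
      by_contra hzR
      exact hz (by simp [scaled, hη.eq_zero (norm_scale_gt ht₀ ht₀R.le hzR)])
    exact integrableOn_smul_of_tsupport_subset hf (hKc t₀)
      ((isCompact_closedBall x R).of_isClosed_subset (isClosed_tsupport _) hts) (hts.trans hR)
  · have := hη.continuous_radialDiv
    have hc : Continuous fun z => -((t₀⁻¹) ^ (d + 1) * radialDiv η (t₀⁻¹ • (z - x))) := by
      fun_prop
    exact hc.aestronglyMeasurable.smul hfm
  · refine Eventually.of_forall fun z t ht => ?_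
    have ht0 : 0 < t := by linarith [ht.1]
    by_cases hz : z ∈ Metric.closedBall x R
    · rw [indicator_of_mem hz, norm_smul, norm_neg, norm_mul, Real.norm_of_nonneg (by positivity)]
      have : t⁻¹ ≤ (t₀ / 2)⁻¹ := by gcongr; exact ht.1.le
      gcongr
      exact hM _
    · rw [indicator_of_notMem hz, hη.radialDiv_eq_zero
        (norm_scale_gt ht0 (by linarith [ht.2]) hz)]
      simp
  · refine Integrable.integrableOn ((integrable_indicator_iff measurableSet_closedBall).2 ?_)
    exact hfi.norm.const_mul _
  · refine Eventually.of_forall fun z t ht => ?_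
    exact (hη.hasDerivAt_scaled x z (by linarith [ht.1] : (0:ℝ) < t).ne').smul_const _

end IsKernel

/-- `Du` is a weak derivative of `f` on `Ω`. -/
def IsWeakDeriv {d : ℕ} (Ω : Set (Euc d)) (f : Euc d → Euc d)
    (Du : Euc d → (Euc d →L[ℝ] Euc d)) : Prop :=
  ∀ φ : Euc d → ℝ, ContDiff ℝ (⊤ : ℕ∞) φ → HasCompactSupport φ → tsupport φ ⊆ Ω →
    ∀ v : Euc d, ∫ x in Ω, fderiv ℝ φ x v • f x = - ∫ x in Ω, φ x • Du x v

theorem sum_coord_smul_single {d : ℕ} (y : Euc d) :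
    ∑ j, y j • (EuclideanSpace.single j (1 : ℝ) : Euc d) = y := by
  ext i
  simp [Finset.sum_apply, Pi.single_apply]

namespace IsKernel

variable {d : ℕ} {η : Euc d → ℝ}

theorem fderiv_coord_scaled (hη : IsKernel η) (x z : Euc d) (t : ℝ) (j : Fin d) :
    fderiv ℝ (fun z => (t⁻¹ • (z - x)) j * scaled η x t z) z (EuclideanSpace.single j 1) =
      (t⁻¹) ^ (d + 1) * (η (t⁻¹ • (z - x)) + (t⁻¹ • (z - x)) j *
        fderiv ℝ η (t⁻¹ • (z - x)) (EuclideanSpace.single j 1)) := by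
  have hy : HasFDerivAt (fun z : Euc d => t⁻¹ • (z - x)) (t⁻¹ • ContinuousLinearMap.id ℝ _) z :=
    ((hasFDerivAt_id z).sub_const x).const_smul t⁻¹
  have hcoord : HasFDerivAt (fun z : Euc d => (t⁻¹ • (z - x)) j)
      ((EuclideanSpace.proj j : Euc d →L[ℝ] ℝ).comp (t⁻¹ • ContinuousLinearMap.id ℝ _)) z :=
    (EuclideanSpace.proj j : Euc d →L[ℝ] ℝ).hasFDerivAt.comp z hy
  have hd : HasFDerivAt η (fderiv ℝ η (t⁻¹ • (z - x))) (t⁻¹ • (z - x)) :=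
    (hη.contDiff.differentiable (by simp) _).hasFDerivAt
  have hs : HasFDerivAt (scaled η x t) _ z := (hd.comp z hy).const_mul ((t⁻¹) ^ d)
  have hprod := hcoord.mul hs
  rw [show ((fun z : Euc d => (t⁻¹ • (z - x)) j) * scaled η x t) =
    fun z => (t⁻¹ • (z - x)) j * scaled η x t z from rfl] at hprod
  rw [hprod.fderiv]
  simp [scaled]
  ring

theorem sum_fderiv_coord_scaled (hη : IsKernel η) (x z : Euc d) (t : ℝ) :
    ∑ j, fderiv ℝ (fun z => (t⁻¹ • (z - x)) j * scaled η x t z) z (EuclideanSpace.single j 1) =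
      (t⁻¹) ^ (d + 1) * radialDiv η (t⁻¹ • (z - x)) := by
  simp only [hη.fderiv_coord_scaled, ← Finset.mul_sum, Finset.sum_add_distrib]
  congr 1
  rw [radialDiv]
  congr 1
  · simp
  · conv_rhs => rw [← sum_coord_smul_single (t⁻¹ • (z - x)), map_sum]
    simp only [map_smul, smul_eq_mul, sum_coord_smul_single]

theorem integral_radialDiv_eq (hη : IsKernel η) {Ω : Set (Euc d)} {f : Euc d → Euc d}
    (hf : LocallyIntegrableOn f Ω volume) {Du : Euc d → (Euc d →L[ℝ] Euc d)}
    (hDu : LocallyIntegrableOn Du Ω volume) (hw : IsWeakDeriv Ω f Du)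
    {x : Euc d} {t : ℝ} (ht : 0 < t) (hball : Metric.closedBall x (2 * t) ⊆ Ω) :
    ∫ z in Ω, (-((t⁻¹) ^ (d + 1) * radialDiv η (t⁻¹ • (z - x)))) • f z =
      ∫ z in Ω, scaled η x t z • Du z (t⁻¹ • (z - x)) := by
  set ψ : Fin d → Euc d → ℝ := fun j z => (t⁻¹ • (z - x)) j * scaled η x t z with hψ
  have hψs : ∀ j, ContDiff ℝ (⊤ : ℕ∞) (ψ j) := fun j => by
    have h1 := hη.contDiff
    have h2 : ContDiff ℝ (⊤ : ℕ∞) fun z : Euc d => t⁻¹ • (z - x) := by fun_prop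
    have h3 : ContDiff ℝ (⊤ : ℕ∞) fun z : Euc d => (t⁻¹ • (z - x)) j :=
      (EuclideanSpace.proj j : Euc d →L[ℝ] ℝ).contDiff.comp h2
    exact h3.mul (contDiff_const.mul (h1.comp h2))
  have hts : ∀ j, tsupport (ψ j) ⊆ Metric.closedBall x (2 * t) := fun j => by
    refine closure_minimal (fun z hz => ?_) Metric.isClosed_closedBall
    by_contra hzR
    exact hz (by simp [hψ, scaled, hη.eq_zero (norm_scale_gt ht le_rfl hzR)])
  have hcs : ∀ j, HasCompactSupport (ψ j) := fun j =>
    (isCompact_closedBall x (2 * t)).of_isClosed_subset (isClosed_tsupport _) (hts j)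
  set e : Fin d → Euc d := fun j => EuclideanSpace.single j 1 with he
  have hint1 : ∀ j, IntegrableOn (fun z => fderiv ℝ (ψ j) z (e j) • f z) Ω volume := fun j => by
    have hc : Continuous (fderiv ℝ (ψ j)) := (hψs j).continuous_fderiv (by simp)
    have hsub : tsupport (fun z => fderiv ℝ (ψ j) z (e j)) ⊆ tsupport (ψ j) :=
      tsupport_fderiv_apply_subset ℝ (e j)
    exact integrableOn_smul_of_tsupport_subset hf (by fun_prop)
      ((hcs j).fderiv_apply ℝ (e j)) (hsub.trans ((hts j).trans hball))
  have hint2 : ∀ j, IntegrableOn (fun z => ψ j z • Du z (e j)) Ω volume := fun j => by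
    have h := integrableOn_smul_of_tsupport_subset hDu (hψs j).continuous (hcs j)
      ((hts j).trans hball)
    exact (ContinuousLinearMap.apply ℝ (Euc d) (e j)).integrable_comp h
  calc ∫ z in Ω, (-((t⁻¹) ^ (d + 1) * radialDiv η (t⁻¹ • (z - x)))) • f z
      = -∑ j, ∫ z in Ω, fderiv ℝ (ψ j) z (e j) • f z := by
        rw [← integral_finsetSum _ fun j _ => hint1 j, ← integral_neg]
        refine integral_congr_ae (Eventually.of_forall fun z => ?_)
        simp only [neg_smul, ← hη.sum_fderiv_coord_scaled, Finset.sum_smul, hψ, he]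
    _ = ∑ j, ∫ z in Ω, ψ j z • Du z (e j) := by
        rw [← Finset.sum_neg_distrib]
        refine Finset.sum_congr rfl fun j _ => ?_
        rw [hw (ψ j) (hψs j) (hcs j) ((hts j).trans hball) (e j), neg_neg]
    _ = ∫ z in Ω, scaled η x t z • Du z (t⁻¹ • (z - x)) := by
        rw [← integral_finsetSum _ fun j _ => hint2 j]
        refine integral_congr_ae (Eventually.of_forall fun z => ?_)
        beta_reduce
        conv_rhs => rw [← sum_coord_smul_single (t⁻¹ • (z - x)), map_sum, Finset.smul_sum]
        refine Finset.sum_congr rfl fun j _ => ?_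
        simp only [hψ, he, map_smul, smul_smul, mul_comm]

/-- Quantitative bound for the radial derivative of the mollification of `f`. -/
theorem norm_integral_scaled_le (hη : IsKernel η) {C : ℝ} (hC : ∀ y, |η y| ≤ C)
    {Ω : Set (Euc d)} (hΩ : MeasurableSet Ω) {Du : Euc d → (Euc d →L[ℝ] Euc d)}
    (hDu : LocallyIntegrableOn Du Ω volume) {x : Euc d} {t n : ℝ} (ht : 0 < t)
    (hball : Metric.closedBall x (2 * t) ⊆ Ω)
    (hn : ∫ z in Metric.closedBall x (2 * t), ‖Du z‖ ≤ n * (2 * t) ^ d) :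
    ‖∫ z in Ω, scaled η x t z • Du z (t⁻¹ • (z - x))‖ ≤ C * 2 * n * 2 ^ d := by
  have hC0 : 0 ≤ C := (abs_nonneg _).trans (hC 0)
  have hi : IntegrableOn Du (Metric.closedBall x (2 * t)) volume :=
    hDu.integrableOn_compact_subset hball (isCompact_closedBall _ _)
  have hsub : ∫ z in Ω, scaled η x t z • Du z (t⁻¹ • (z - x)) =
      ∫ z in Metric.closedBall x (2 * t), scaled η x t z • Du z (t⁻¹ • (z - x)) := by
    refine setIntegral_eq_of_subset_of_forall_sdiff_eq_zero hΩ hball fun z hz => ?_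
    simp [scaled, hη.eq_zero (norm_scale_gt ht le_rfl hz.2)]
  rw [hsub]
  calc _ ≤ ∫ z in Metric.closedBall x (2 * t), ((t⁻¹) ^ d * C * 2) * ‖Du z‖ := by
        refine norm_integral_le_of_norm_le (hi.norm.const_mul _) ?_
        refine (ae_restrict_iff' measurableSet_closedBall).2 (Eventually.of_forall fun z hz => ?_)
        have h2 : ‖t⁻¹ • (z - x)‖ ≤ 2 := by
          rw [Metric.mem_closedBall, dist_eq_norm] at hz
          rw [norm_smul, norm_inv, Real.norm_of_nonneg ht.le, ← div_eq_inv_mul, div_le_iff₀ ht]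
          exact hz
        rw [norm_smul, scaled, norm_mul, Real.norm_of_nonneg (by positivity)]
        calc _ ≤ (t⁻¹) ^ d * C * (‖Du z‖ * 2) := by
              gcongr
              · exact hC _
              · exact (Du z).le_opNorm_of_le h2
          _ = _ := by ring
    _ ≤ ((t⁻¹) ^ d * C * 2) * (n * (2 * t) ^ d) := by
        rw [integral_const_mul]
        gcongr
    _ = C * 2 * n * 2 ^ d := by
        rw [mul_pow, inv_pow]
        field_simp

/-- At a Lebesgue point the mollifications converge. -/
theorem tendsto_integral_scaled (hη : IsKernel η) (h1 : ∫ y, η y = 1) {C : ℝ}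
    (hC : ∀ y, |η y| ≤ C) {Ω : Set (Euc d)} (hΩ : MeasurableSet Ω) {f : Euc d → Euc d}
    (hf : LocallyIntegrableOn f Ω volume) {x : Euc d} {R : ℝ} (hR0 : 0 < R)
    (hR : Metric.closedBall x R ⊆ Ω)
    (hx : Tendsto (fun r => ⨍ y in Metric.closedBall x r, ‖f y - f x‖) (𝓝[>] 0) (𝓝 0)) :
    Tendsto (fun t => ∫ z in Ω, scaled η x t z • f z) (𝓝[>] 0) (𝓝 (f x)) := by
  have hC0 : 0 ≤ C := (abs_nonneg _).trans (hC 0)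
  set b := volume.real (Metric.ball (0 : Euc d) 1) with hb
  have ht2 : Tendsto (fun t : ℝ => 2 * t) (𝓝[>] 0) (𝓝[>] 0) := by
    refine tendsto_nhdsWithin_iff.2 ⟨?_, ?_⟩
    · exact ((continuous_const.mul continuous_id).tendsto' 0 0 (by simp)).mono_left
        nhdsWithin_le_nhds
    · filter_upwards [self_mem_nhdsWithin] with t ht
      exact mul_pos two_pos (mem_Ioi.1 ht)
  have hlim := ((hx.comp ht2).const_mul (C * 2 ^ d * b))
  rw [mul_zero] at hlim
  rw [tendsto_iff_norm_sub_tendsto_zero]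
  refine squeeze_zero' (Eventually.of_forall fun _ => norm_nonneg _) ?_ hlim
  have hsmall : ∀ᶠ t : ℝ in 𝓝[>] 0, t < R / 2 :=
    eventually_nhdsWithin_of_eventually_nhds (eventually_lt_nhds (by positivity))
  filter_upwards [hsmall, self_mem_nhdsWithin] with t htR ht
  have ht : 0 < t := ht
  have hball : Metric.closedBall x (2 * t) ⊆ Ω :=
    (Metric.closedBall_subset_closedBall (by linarith)).trans hR
  have hi : IntegrableOn f (Metric.closedBall x (2 * t)) volume :=
    hf.integrableOn_compact_subset hball (isCompact_closedBall _ _)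
  have hηc := hη.contDiff.continuous
  have hKc : Continuous (scaled η x t) := by unfold scaled; fun_prop
  have hzero : ∀ z ∉ Metric.closedBall x (2 * t), scaled η x t z = 0 := fun z hz => by
    simp [scaled, hη.eq_zero (norm_scale_gt ht le_rfl hz)]
  have hmass : ∫ z in Metric.closedBall x (2 * t), scaled η x t z = 1 := by
    rw [setIntegral_eq_integral_of_forall_compl_eq_zero hzero]
    have h2 : ∫ z, scaled η x t z = (t⁻¹) ^ d * ∫ z : Euc d, η (t⁻¹ • z) := by
      rw [← integral_const_mul]
      exact integral_sub_right_eq_self (fun z : Euc d => (t⁻¹) ^ d * η (t⁻¹ • z)) x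
    rw [h2, Measure.integral_comp_smul, h1, finrank_euclideanSpace_fin]
    have : 0 < (t⁻¹) ^ d := by positivity
    rw [abs_of_pos (by positivity), smul_eq_mul, mul_one, mul_inv_cancel₀ this.ne']
  have hKi : IntegrableOn (fun z => scaled η x t z • f z) (Metric.closedBall x (2 * t)) volume :=
    hi.continuousOn_smul hKc.continuousOn (isCompact_closedBall _ _)
  have hKi' : IntegrableOn (fun z => scaled η x t z • f x) (Metric.closedBall x (2 * t)) volume :=
    (by fun_prop : Continuous fun z => scaled η x t z • f x).continuousOn.integrableOn_compact
      (isCompact_closedBall _ _)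
  have hvol : volume.real (Metric.closedBall x (2 * t)) = (2 * t) ^ d * b := by
    rw [Measure.real, Measure.addHaar_closedBall _ _ (by positivity), ENNReal.toReal_mul,
      ENNReal.toReal_ofReal (by positivity), finrank_euclideanSpace_fin]
    rfl
  have hbpos : 0 < b := ENNReal.toReal_pos (Metric.measure_ball_pos _ _ one_pos).ne'
    measure_ball_lt_top.ne
  have hsub : (∫ z in Ω, scaled η x t z • f z) - f x =
      ∫ z in Metric.closedBall x (2 * t), scaled η x t z • (f z - f x) := by
    rw [setIntegral_eq_of_subset_of_forall_sdiff_eq_zero hΩ hball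
      fun z hz => by simp [hzero z hz.2]]
    simp only [smul_sub]
    rw [integral_sub hKi hKi', integral_smul_const, hmass, one_smul]
  have hin : IntegrableOn (fun z => ‖f z - f x‖) (Metric.closedBall x (2 * t)) volume :=
    (hi.sub (integrableOn_const measure_closedBall_lt_top.ne)).norm
  rw [hsub]
  calc _ ≤ ∫ z in Metric.closedBall x (2 * t), ((t⁻¹) ^ d * C) * ‖f z - f x‖ := by
        refine norm_integral_le_of_norm_le (hin.const_mul _) (Eventually.of_forall fun z => ?_)
        rw [norm_smul, scaled, norm_mul, Real.norm_of_nonneg (by positivity)]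
        gcongr
        exact hC _
    _ = C * 2 ^ d * b * ⨍ y in Metric.closedBall x (2 * t), ‖f y - f x‖ := by
        rw [integral_const_mul, setAverage_eq, hvol, mul_pow, inv_pow, smul_eq_mul]
        field_simp

/-- The distance between a Sobolev function and its mollification at scale `ρ`. -/
theorem norm_integral_scaled_sub_le (hη : IsKernel η) (h1 : ∫ y, η y = 1) {C : ℝ}
    (hC : ∀ y, |η y| ≤ C) {Ω : Set (Euc d)} (hΩ : MeasurableSet Ω) {f : Euc d → Euc d}
    (hf : LocallyIntegrableOn f Ω volume) {Du : Euc d → (Euc d →L[ℝ] Euc d)}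
    (hDu : LocallyIntegrableOn Du Ω volume) (hw : IsWeakDeriv Ω f Du) {x : Euc d} {R n : ℝ}
    (hR : Metric.closedBall x R ⊆ Ω)
    (hx : Tendsto (fun r => ⨍ y in Metric.closedBall x r, ‖f y - f x‖) (𝓝[>] 0) (𝓝 0))
    (hn : ∀ r, 0 < r → r < R → ∫ z in Metric.closedBall x r, ‖Du z‖ ≤ n * r ^ d)
    {ρ : ℝ} (hρ : 0 < ρ) (hρR : 2 * ρ < R) :
    ‖(∫ z in Ω, scaled η x ρ z • f z) - f x‖ ≤ C * 2 * n * 2 ^ d * ρ := by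
  have hlim := hη.tendsto_integral_scaled h1 hC hΩ hf (by linarith : 0 < R) hR hx
  refine le_of_tendsto (hlim.const_sub _).norm ?_
  have hsmall : ∀ᶠ t : ℝ in 𝓝[>] 0, t < ρ :=
    eventually_nhdsWithin_of_eventually_nhds (eventually_lt_nhds hρ)
  filter_upwards [hsmall, self_mem_nhdsWithin] with t htρ ht
  have ht : 0 < t := ht
  have hsub : ∀ s ∈ Icc t ρ, Metric.closedBall x (2 * s) ⊆ Ω := fun s hs =>
    (Metric.closedBall_subset_closedBall (by linarith [hs.2])).trans hR
  have hbd : ∀ s ∈ Icc t ρ,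
      ‖∫ z in Ω, scaled η x s z • Du z (s⁻¹ • (z - x))‖ ≤ C * 2 * n * 2 ^ d := fun s hs =>
    hη.norm_integral_scaled_le hC hΩ hDu (by linarith [hs.1]) (hsub s hs)
      (hn _ (by linarith [hs.1]) (by linarith [hs.2]))
  have hmv := (convex_Icc t ρ).norm_image_sub_le_of_norm_hasDerivWithin_le
    (f := fun t => ∫ z in Ω, scaled η x t z • f z)
    (f' := fun s => ∫ z in Ω, scaled η x s z • Du z (s⁻¹ • (z - x)))
    (fun s hs => by
      have h0 : 0 < s := by linarith [hs.1]
      simp only [← hη.integral_radialDiv_eq hf hDu hw h0 (hsub s hs)]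
      exact (hη.hasDerivAt_integral_scaled hf hR h0 (by linarith [hs.2])).hasDerivWithinAt)
    hbd (left_mem_Icc.2 htρ.le) (right_mem_Icc.2 htρ.le)
  refine hmv.trans ?_
  rw [Real.norm_of_nonneg (by linarith)]
  have h0 := (norm_nonneg _).trans (hbd t (left_mem_Icc.2 htρ.le))
  gcongr
  linarith

end IsKernel

/-- `x` is a Lebesgue point of `g`. -/
def IsLebesguePoint {d : ℕ} {F : Type*} [NormedAddCommGroup F] (g : Euc d → F)
    (x : Euc d) : Prop :=
  Tendsto (fun r => ⨍ y in Metric.closedBall x r, ‖g y - g x‖) (𝓝[>] 0) (𝓝 0)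

theorem ae_isLebesguePoint {d : ℕ} {F : Type*} [NormedAddCommGroup F] {Ω : Set (Euc d)}
    (hΩ : IsOpen Ω) {g : Euc d → F} (hg : LocallyIntegrableOn g Ω volume) :
    ∀ᵐ x, x ∈ Ω → IsLebesguePoint g x := by
  refine measure_null_of_locally_null _ fun x₀ hx₀ => ?_
  have hx₀Ω : x₀ ∈ Ω := by
    by_contra h
    exact hx₀ fun h' => absurd h' h
  obtain ⟨ρ, hρ, hball⟩ := Metric.nhds_basis_closedBall.mem_iff.1 (hΩ.mem_nhds hx₀Ω)
  refine ⟨_, inter_mem_nhdsWithin _ (Metric.ball_mem_nhds x₀ hρ), ?_⟩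
  set g' := (Metric.closedBall x₀ ρ).indicator g with hg'
  have hint : Integrable g' volume := (integrable_indicator_iff measurableSet_closedBall).2
    (hg.integrableOn_compact_subset hball (isCompact_closedBall _ _))
  have hae := (Besicovitch.vitaliFamily (volume : Measure (Euc d))).ae_tendsto_average_norm_sub
    hint.locallyIntegrable
  refine measure_mono_null ?_ (ae_iff.1 hae)
  rintro x ⟨hx, hxb⟩ hlim
  refine hx fun _ => ?_
  have hlim' := hlim.comp (Besicovitch.tendsto_filterAt volume x)
  refine hlim'.congr' ?_
  obtain ⟨δ, hδ, hsub⟩ := Metric.nhds_basis_closedBall.mem_iff.1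
    (Metric.isOpen_ball.mem_nhds hxb)
  have hsmall : ∀ᶠ r : ℝ in 𝓝[>] 0, r < δ :=
    eventually_nhdsWithin_of_eventually_nhds (eventually_lt_nhds hδ)
  filter_upwards [hsmall] with r hr
  have heq : ∀ y ∈ Metric.ball x₀ ρ, g' y = g y := fun y hy =>
    indicator_of_mem (Metric.ball_subset_closedBall hy) _
  simp only [comp_apply, setAverage_eq]
  congr 1
  refine setIntegral_congr_fun measurableSet_closedBall fun y hy => ?_
  simp only [heq x hxb, heq y (hsub (Metric.closedBall_subset_closedBall hr.le hy))]

theorem IsLebesguePoint.exists_integral_le {d : ℕ} {Ω : Set (Euc d)} (hΩ : IsOpen Ω)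
    {g : Euc d → ℝ} (hg : LocallyIntegrableOn g Ω volume) {x : Euc d} (hxΩ : x ∈ Ω)
    (hx : IsLebesguePoint g x) :
    ∃ n : ℕ, Metric.closedBall x (1 / ((n : ℝ) + 1)) ⊆ Ω ∧ ∀ r, 0 < r → r < 1 / ((n : ℝ) + 1) →
      ∫ z in Metric.closedBall x r, g z ≤ n * r ^ d := by
  obtain ⟨ρ, hρ, hball⟩ := Metric.nhds_basis_closedBall.mem_iff.1 (hΩ.mem_nhds hxΩ)
  have hev : ∀ᶠ r : ℝ in 𝓝[>] 0, ⨍ y in Metric.closedBall x r, ‖g y - g x‖ < 1 :=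
    hx.eventually_lt_const one_pos
  rw [eventually_nhdsWithin_iff, Metric.eventually_nhds_iff] at hev
  obtain ⟨δ, hδ, hev⟩ := hev
  set b := volume.real (Metric.ball (0 : Euc d) 1) with hb
  obtain ⟨n, hn⟩ := exists_nat_gt (max ((|g x| + 1) * b) (max (1 / ρ) (1 / δ)))
  simp only [max_lt_iff] at hn
  obtain ⟨hnb, hnρ, hnδ⟩ := hn
  have hlt : ∀ a : ℝ, 0 < a → 1 / a < n → 1 / ((n : ℝ) + 1) < a := fun a ha h => by
    rw [div_lt_iff₀ ha] at h
    rw [div_lt_iff₀ (by positivity)]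
    linarith
  have hnρ := hlt ρ hρ hnρ
  have hnδ := hlt δ hδ hnδ
  refine ⟨n, (Metric.closedBall_subset_closedBall hnρ.le).trans hball, fun r hr0 hr => ?_⟩
  have hvol : volume.real (Metric.closedBall x r) = r ^ d * b := by
    rw [Measure.real, Measure.addHaar_closedBall _ _ (by positivity), ENNReal.toReal_mul,
      ENNReal.toReal_ofReal (by positivity), finrank_euclideanSpace_fin]
    rfl
  have hbpos : 0 < b := ENNReal.toReal_pos (Metric.measure_ball_pos _ _ one_pos).ne'
    measure_ball_lt_top.ne
  have hi : IntegrableOn g (Metric.closedBall x r) volume :=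
    hg.integrableOn_compact_subset ((Metric.closedBall_subset_closedBall (by linarith)).trans hball)
      (isCompact_closedBall _ _)
  have hc : IntegrableOn (fun _ => |g x|) (Metric.closedBall x r) volume :=
    integrableOn_const measure_closedBall_lt_top.ne
  have hd : IntegrableOn (fun z => ‖g z - g x‖) (Metric.closedBall x r) volume :=
    (hi.sub (integrableOn_const measure_closedBall_lt_top.ne)).norm
  have havg := hev (y := r) (by simpa [abs_of_pos hr0] using hr.trans hnδ) hr0
  rw [setAverage_eq, hvol, smul_eq_mul, inv_mul_lt_iff₀ (by positivity), mul_one] at havg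
  calc ∫ z in Metric.closedBall x r, g z
      ≤ ∫ z in Metric.closedBall x r, (‖g z - g x‖ + |g x|) := by
        refine setIntegral_mono hi (hd.add hc) fun z => ?_
        have h1 := le_abs_self (g z - g x)
        have h2 := le_abs_self (g x)
        simp only [Real.norm_eq_abs]
        linarith
    _ = (∫ z in Metric.closedBall x r, ‖g z - g x‖) + r ^ d * b * |g x| := by
        rw [integral_add hd hc, setIntegral_const, hvol, smul_eq_mul]
    _ ≤ ((|g x| + 1) * b) * r ^ d := by linarith
    _ ≤ n * r ^ d := by gcongr

theorem IsKernel.translate {d : ℕ} {η : Euc d → ℝ} (hη : ContDiff ℝ (⊤ : ℕ∞) η)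
    (hs : tsupport η ⊆ Metric.closedBall 0 1) {v : Euc d} (hv : ‖v‖ ≤ 1) :
    IsKernel fun w => η (w - v) := by
  refine ⟨hη.comp (contDiff_id.sub contDiff_const), ?_⟩
  refine closure_minimal (fun w hw => ?_) Metric.isClosed_closedBall
  have h1 : ‖w - v‖ ≤ 1 := by simpa using hs (subset_tsupport η hw)
  have h2 := norm_add_le (w - v) v
  rw [sub_add_cancel] at h2
  simp only [Metric.mem_closedBall, dist_zero_right]
  linarith

/-- Pointwise Lipschitz estimate for Sobolev functions at points where the averages of the weak
derivative are controlled. -/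
theorem IsWeakDeriv.norm_image_sub_le {d : ℕ} {η : Euc d → ℝ} (hη : ContDiff ℝ (⊤ : ℕ∞) η)
    (hs : tsupport η ⊆ Metric.closedBall 0 1) (h1 : ∫ y, η y = 1) {C : ℝ}
    (hC : ∀ y, |η y| ≤ C) {Ω : Set (Euc d)} (hΩ : MeasurableSet Ω) {f : Euc d → Euc d}
    (hf : LocallyIntegrableOn f Ω volume) {Du : Euc d → (Euc d →L[ℝ] Euc d)}
    (hDu : LocallyIntegrableOn Du Ω volume) (hw : IsWeakDeriv Ω f Du) {x y : Euc d} {R n : ℝ}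
    (hxR : Metric.closedBall x R ⊆ Ω) (hyR : Metric.closedBall y R ⊆ Ω)
    (hx : IsLebesguePoint f x) (hy : IsLebesguePoint f y)
    (hnx : ∀ r, 0 < r → r < R → ∫ z in Metric.closedBall x r, ‖Du z‖ ≤ n * r ^ d)
    (hny : ∀ r, 0 < r → r < R → ∫ z in Metric.closedBall y r, ‖Du z‖ ≤ n * r ^ d)
    (hxy : ‖x - y‖ < R) :
    ‖f x - f y‖ ≤ C * 2 * n * 2 ^ d * ‖x - y‖ := by
  rcases eq_or_ne x y with rfl | hne
  · simp
  set ρ := ‖x - y‖ / 2 with hρ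
  have hpos : 0 < ‖x - y‖ := norm_pos_iff.2 (sub_ne_zero.2 hne)
  have hρ0 : 0 < ρ := by positivity
  set c : Euc d := (1 / 2 : ℝ) • (x + y) with hc
  set I := ∫ z in Ω, ((ρ⁻¹) ^ d * η (ρ⁻¹ • (z - c))) • f z with hI
  have key : ∀ p : Euc d, ‖c - p‖ = ρ → Metric.closedBall p R ⊆ Ω → IsLebesguePoint f p →
      (∀ r, 0 < r → r < R → ∫ z in Metric.closedBall p r, ‖Du z‖ ≤ n * r ^ d) →
      ‖I - f p‖ ≤ C * 2 * n * 2 ^ d * ρ := by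
    intro p hcp hpR hp hnp
    have hk : IsKernel fun w => η (w - ρ⁻¹ • (c - p)) := IsKernel.translate hη hs (by
      rw [norm_smul, hcp, norm_inv, Real.norm_of_nonneg hρ0.le, inv_mul_cancel₀ hρ0.ne'])
    have h1' : ∫ w, η (w - ρ⁻¹ • (c - p)) = 1 := by
      rw [integral_sub_right_eq_self η, h1]
    have := hk.norm_integral_scaled_sub_le h1' (fun w => hC _) hΩ hf hDu hw hpR hp hnp hρ0
      (by linarith)
    convert this using 5 with z
    rw [scaled, ← smul_sub, show z - p - (c - p) = z - c by abel]
  have hcx : ‖c - x‖ = ρ := by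
    rw [show c - x = (-(1 / 2) : ℝ) • (x - y) by rw [hc]; module, norm_smul]
    norm_num [hρ]
    ring
  have hcy : ‖c - y‖ = ρ := by
    rw [show c - y = (1 / 2 : ℝ) • (x - y) by rw [hc]; module, norm_smul]
    norm_num [hρ]
    ring
  have hfx := key x hcx hxR hx hnx
  have hfy := key y hcy hyR hy hny
  calc ‖f x - f y‖ = ‖(I - f y) - (I - f x)‖ := by congr 1; abel
    _ ≤ ‖I - f y‖ + ‖I - f x‖ := norm_sub_le _ _
    _ ≤ C * 2 * n * 2 ^ d * ρ + C * 2 * n * 2 ^ d * ρ := add_le_add hfy hfx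
    _ = _ := by rw [hρ]; ring

/-- Almost all of `Ω` is covered by countably many sets on which a `W^{1,1}_loc` map is
Lipschitz. -/
theorem MemW11loc.exists_lipschitzOnWith_cover {d : ℕ} {Ω : Set (Euc d)} (hΩ : IsOpen Ω)
    {f : Euc d → Euc d} (h : MemW11loc Ω f) :
    ∃ A : ℕ × ℕ → Set (Euc d), (∀ k, ∃ C : NNReal, LipschitzOnWith C f (A k)) ∧
      ∀ᵐ x, x ∈ Ω → ∃ k, x ∈ A k := by
  obtain ⟨hf, Du, hm, hnorm, hw⟩ := h
  have hDu : LocallyIntegrableOn Du Ω volume := fun x hx => by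
    obtain ⟨U, hU, hUi⟩ := hnorm x hx
    refine ⟨U ∩ Ω, inter_mem hU self_mem_nhdsWithin, ?_⟩
    exact (integrable_norm_iff (hm.mono_set inter_subset_right)).1
      (hUi.mono_set inter_subset_left)
  let φ : ContDiffBump (0 : Euc d) := ⟨1 / 2, 1, by norm_num, by norm_num⟩
  set η := φ.normed volume with hη
  have hηs : ContDiff ℝ (⊤ : ℕ∞) η := φ.contDiff_normed
  obtain ⟨C, hC⟩ := φ.hasCompactSupport_normed.exists_bound_of_continuous
    (hηs.continuous)
  have hC0 : 0 ≤ C := (norm_nonneg _).trans (hC 0)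
  let R : ℕ → ℝ := fun n => 1 / ((n : ℝ) + 1)
  have hR : ∀ n, 0 < R n := fun n => by positivity
  let A : ℕ × ℕ → Set (Euc d) := fun k =>
    {x | (Metric.closedBall x (R k.1) ⊆ Ω ∧ ∀ r, 0 < r → r < R k.1 →
      ∫ z in Metric.closedBall x r, ‖Du z‖ ≤ k.1 * r ^ d) ∧ IsLebesguePoint f x ∧
      dist x (TopologicalSpace.denseSeq (Euc d) k.2) < R k.1 / 2}
  refine ⟨A, fun k => ⟨⟨C * 2 * k.1 * 2 ^ d, by positivity⟩, ?_⟩, ?_⟩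
  · refine LipschitzOnWith.of_dist_le_mul fun x hx y hy => ?_
    rw [dist_eq_norm, dist_eq_norm]
    refine IsWeakDeriv.norm_image_sub_le hηs (φ.tsupport_normed_eq (μ := volume)).subset
      φ.integral_normed hC hΩ.measurableSet hf hDu hw hx.1.1 hy.1.1 hx.2.1 hy.2.1 hx.1.2 hy.1.2 ?_
    rw [← dist_eq_norm]
    have h1 := hx.2.2
    have h2 := hy.2.2
    rw [dist_comm] at h2
    linarith [dist_triangle x (TopologicalSpace.denseSeq (Euc d) k.2) y]
  · filter_upwards [ae_isLebesguePoint hΩ hf, ae_isLebesguePoint hΩ hnorm] with x hx hxD hxΩ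
    obtain ⟨n, hn⟩ := (hxD hxΩ).exists_integral_le hΩ hnorm hxΩ
    obtain ⟨k, hk⟩ := (TopologicalSpace.denseRange_denseSeq (Euc d)).exists_dist_lt x
      (half_pos (hR n))
    exact ⟨(n, k), hn, hx hxΩ, hk⟩

theorem dist_cons_le {d N : ℕ} (z z' : Euc d) (W W' : Fin N → Euc d) {r : ℝ}
    (hz : dist z z' ≤ r) (hW : ∀ l, dist (W l) (W' l) ≤ r) :
    dist (Fin.cons z W : Fin (N + 1) → Euc d) (Fin.cons z' W') ≤ r := by
  refine (dist_pi_le_iff (dist_nonneg.trans hz)).2 fun i => ?_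
  refine Fin.cases ?_ (fun l => ?_) i
  · simpa using hz
  · simpa using hW l

theorem LipschitzWith.cons_left {d N : ℕ} {H : (Fin (N + 1) → Euc d) → ℝ} {C : NNReal}
    (hH : LipschitzWith C H) (W : Fin N → Euc d) :
    LipschitzWith C fun z : Euc d => H (Fin.cons z W) :=
  LipschitzWith.of_dist_le_mul fun z z' => (hH.dist_le_mul _ _).trans <| by
    gcongr
    exact dist_cons_le _ _ _ _ le_rfl fun l => by simp

theorem exists_common_lipschitz {d N : ℕ} {B : Set (Euc d)} {v : Fin N → Euc d → Euc d}
    (hv : ∀ l, ∃ C : NNReal, LipschitzOnWith C (v l) B) :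
    ∃ K : ℝ, 1 ≤ K ∧ ∀ l, ∀ z ∈ B, ∀ z' ∈ B, dist (v l z) (v l z') ≤ K * dist z z' := by
  choose C hC using hv
  refine ⟨1 + ∑ l, (C l : ℝ), by simp [Finset.sum_nonneg], fun l z hz z' hz' => ?_⟩
  refine ((hC l).dist_le_mul z hz z' hz').trans ?_
  have : (C l : ℝ) ≤ ∑ l, (C l : ℝ) :=
    Finset.single_le_sum (f := fun l => (C l : ℝ)) (fun _ _ => NNReal.coe_nonneg _)
      (Finset.mem_univ l)
  gcongr
  linarith

/-- `u x` is a subgradient of `H (x, ·)` at `Y x`. -/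
def IsSubgradientAt {d N : ℕ} (H : (Fin (N + 1) → Euc d) → ℝ) (Y : Euc d → Fin N → Euc d)
    (u : Fin N → Euc d → Euc d) (x : Euc d) : Prop :=
  ∀ W : Fin N → Euc d,
    H (Fin.cons x W) ≥ H (Fin.cons x (Y x)) + ∑ l, ⟪u l x, W l - Y x l⟫

section FirstSlot

variable {d N : ℕ} {H : (Fin (N + 1) → Euc d) → ℝ} {C : NNReal} {Y : Euc d → Fin N → Euc d}
  {u : Fin N → Euc d → Euc d} {B : Set (Euc d)}

theorem ae_differentiableAt_first_of_lipschitz_subgradient (hH : LipschitzWith C H)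
    (hccv : ConcaveFirst H) (hsub : ∀ z ∈ B, IsSubgradientAt H Y u z) {M : ℝ}
    (hM : ∀ z ∈ B, ∀ l, ‖Y z l‖ ≤ M)
    (hu : ∀ l, ∃ C : NNReal, LipschitzOnWith C (u l) B) :
    ∀ᵐ x, x ∈ B → DifferentiableAt ℝ (fun w => H (Fin.cons w (Y x))) x := by
  obtain ⟨K, hK1, hK⟩ := exists_common_lipschitz hu
  set k : Euc d → ℝ := fun z => ∑ l, ⟪u l z, Y z l⟫ - H (Fin.cons z (Y z)) with hk
  have hlow : ∀ z ∈ B, ∀ x, ∑ l, ⟪u l z, Y x l⟫ - k z ≤ H (Fin.cons z (Y x)) := by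
    intro z hz x
    have := hsub z hz (Y x)
    simp only [inner_sub_right, Finset.sum_sub_distrib] at this
    simp only [hk]
    linarith
  have hone : ∀ x ∈ B, ∀ z ∈ B, k x - k z ≤ (N * (K * |M|) + C) * dist x z := by
    intro x hx z hz
    have h1 := hlow z hz x
    have h2 : ∑ l, ⟪u l x, Y x l⟫ - ∑ l, ⟪u l z, Y x l⟫ ≤ N * (K * |M|) * dist x z := by
      rw [← Finset.sum_sub_distrib]
      calc _ ≤ ∑ _l : Fin N, K * |M| * dist x z := by
            refine Finset.sum_le_sum fun l _ => ?_
            rw [← inner_sub_left]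
            refine (real_inner_le_norm _ _).trans ?_
            have h3 := hK l x hx z hz
            rw [dist_eq_norm] at h3
            calc _ ≤ (K * dist x z) * |M| := by
                  gcongr
                  exact (hM x hx l).trans (le_abs_self M)
              _ = _ := by ring
        _ = _ := by simp; ring
    have h3 : H (Fin.cons z (Y x)) - H (Fin.cons x (Y x)) ≤ C * dist x z := by
      have := (hH.cons_left (Y x)).dist_le_mul z x
      rw [Real.dist_eq, dist_comm] at this
      exact (le_abs_self _).trans this
    have hkx : k x = ∑ l, ⟪u l x, Y x l⟫ - H (Fin.cons x (Y x)) := rfl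
    linarith
  have hkL : LipschitzOnWith (⟨N * (K * |M|) + C, by positivity⟩ : NNReal) k B := by
    refine LipschitzOnWith.of_dist_le_mul fun x hx z hz => ?_
    rw [Real.dist_eq, abs_le]
    have h1 := hone x hx z hz
    have h2 := hone z hz x hx
    rw [dist_comm] at h2
    change -((N * (K * |M|) + C) * dist x z) ≤ _ ∧ _ ≤ (N * (K * |M|) + C) * dist x z
    constructor <;> linarith
  have hud : ∀ᵐ x, ∀ l, x ∈ B → DifferentiableWithinAt ℝ (u l) B x :=
    ae_all_iff.2 fun l => (hu l).choose_spec.ae_differentiableWithinAt_of_mem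
  filter_upwards [hkL.ae_differentiableWithinAt_of_mem, hud, ae_densityOne B]
    with x hkx hux hdx hxB
  have hR : DifferentiableWithinAt ℝ (fun z => ∑ l, ⟪u l z, Y x l⟫ - k z) B x := by
    refine DifferentiableWithinAt.sub ?_ (hkx hxB)
    refine DifferentiableWithinAt.fun_sum fun l _ => ?_
    exact (hux l hxB).inner ℝ (differentiableWithinAt_const _)
  refine ((hccv (Y x)).hasFDerivAt_of_density (hH.cons_left (Y x))
    (L := fderivWithin ℝ (fun z => ∑ l, ⟪u l z, Y x l⟫ - k z) B x)
    fun ε hε => ⟨B, hdx hxB, ?_⟩).differentiableAt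
  filter_upwards [hR.hasFDerivWithinAt.eventually_ge hε, self_mem_nhdsWithin] with z hz hzB
  have h1 := hlow z hzB x
  have h2 : ∑ l, ⟪u l x, Y x l⟫ - k x = H (Fin.cons x (Y x)) := by simp [hk]
  rw [h2] at hz
  linarith

theorem ae_differentiableAt_first_of_lipschitz_tail (hH : LipschitzWith C H)
    (hccv : ConcaveFirst H) (hsub : ∀ z ∈ B, IsSubgradientAt H Y u z)
    (hY : ∀ l, ∃ C : NNReal, LipschitzOnWith C (fun z => Y z l) B) :
    ∀ᵐ x, x ∈ B → DifferentiableAt ℝ (fun w => H (Fin.cons w (Y x))) x := by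
  obtain ⟨K, hK1, hK⟩ := exists_common_lipschitz hY
  set h : Euc d → ℝ := fun z => H (Fin.cons z (Y z)) with hh
  have hhL : LipschitzOnWith (⟨C * K, by positivity⟩ : NNReal) h B := by
    refine LipschitzOnWith.of_dist_le_mul fun x hx z hz => (hH.dist_le_mul _ _).trans ?_
    change _ ≤ C * K * dist x z
    rw [mul_assoc]
    gcongr
    exact dist_cons_le _ _ _ _ (le_mul_of_one_le_left dist_nonneg hK1) fun l => hK l x hx z hz
  have hYd : ∀ᵐ x, ∀ l, x ∈ B → DifferentiableWithinAt ℝ (fun z => Y z l) B x :=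
    ae_all_iff.2 fun l => (hY l).choose_spec.ae_differentiableWithinAt_of_mem
  let q := TopologicalSpace.denseSeq (Fin N → Euc d)
  let E : ℕ → ℕ → Set (Euc d) := fun n m =>
    B ∩ {z | dist (fun l => u l z) (q m) < 1 / ((n : ℝ) + 1)}
  have hE : ∀ᵐ x, ∀ n m, x ∈ E n m → DensityOne (E n m) x :=
    ae_all_iff.2 fun n => ae_all_iff.2 fun m => ae_densityOne (E n m)
  filter_upwards [hhL.ae_differentiableWithinAt_of_mem, hYd, hE] with x hhx hYx hEx hxB
  set R : Euc d → ℝ := fun z => h z + ∑ l, ⟪u l x, Y x l - Y z l⟫ with hRdef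
  have hR : DifferentiableWithinAt ℝ R B x := by
    refine DifferentiableWithinAt.add (hhx hxB) ?_
    refine DifferentiableWithinAt.fun_sum fun l _ => ?_
    exact (differentiableWithinAt_const _).inner ℝ ((differentiableWithinAt_const _).sub (hYx l hxB))
  refine ((hccv (Y x)).hasFDerivAt_of_density (hH.cons_left (Y x))
    (L := fderivWithin ℝ R B x) fun ε hε => ?_).differentiableAt
  obtain ⟨n, hn⟩ := exists_nat_gt (4 * N * K / ε)
  have hnε : N * (2 * (1 / ((n : ℝ) + 1)) * K) ≤ ε / 2 := by
    rw [div_lt_iff₀ hε] at hn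
    have h0 : (0 : ℝ) < n + 1 := by positivity
    rw [show N * (2 * (1 / ((n : ℝ) + 1)) * K) = 2 * N * K / (n + 1) by ring, div_le_iff₀ h0]
    linarith
  obtain ⟨m, hm⟩ := (TopologicalSpace.denseRange_denseSeq (Fin N → Euc d)).exists_dist_lt
    (fun l => u l x) (show (0 : ℝ) < 1 / ((n : ℝ) + 1) by positivity)
  refine ⟨E n m, hEx n m ⟨hxB, hm⟩, ?_⟩
  have hlow := hR.hasFDerivWithinAt.eventually_ge (half_pos hε)
  filter_upwards [nhdsWithin_mono x inter_subset_left hlow, self_mem_nhdsWithin] with z hz hzE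
  have hdist : ∀ l, ‖u l x - u l z‖ ≤ 2 * (1 / ((n : ℝ) + 1)) := fun l => by
    have h1 : dist (fun l => u l z) (q m) < 1 / ((n : ℝ) + 1) := hzE.2
    have h2 := dist_triangle_right (fun l => u l x) (fun l => u l z) (q m)
    have h3 := dist_le_pi_dist (fun l => u l x) (fun l => u l z) l
    have hm' : dist (fun l => u l x) (q m) < 1 / ((n : ℝ) + 1) := hm
    rw [← dist_eq_norm]
    linarith
  have hsum : ∑ l, ⟪u l x, Y x l - Y z l⟫ - ∑ l, ⟪u l z, Y x l - Y z l⟫ ≤ ε / 2 * ‖z - x‖ := by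
    rw [← Finset.sum_sub_distrib]
    calc _ ≤ ∑ _l : Fin N, (2 * (1 / ((n : ℝ) + 1))) * (K * ‖z - x‖) := by
          refine Finset.sum_le_sum fun l _ => ?_
          rw [← inner_sub_left]
          refine (real_inner_le_norm _ _).trans ?_
          have h3 := hK l x hxB z hzE.1
          rw [dist_eq_norm, dist_comm, dist_eq_norm] at h3
          exact mul_le_mul (hdist l) h3 (norm_nonneg _) (by positivity)
      _ = N * (2 * (1 / ((n : ℝ) + 1)) * K) * ‖z - x‖ := by
          rw [Finset.sum_const, Finset.card_univ, Fintype.card_fin, nsmul_eq_mul]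
          ring
      _ ≤ _ := by gcongr
  have hs := hsub z hzE.1 (Y x)
  have hRx : R x = H (Fin.cons x (Y x)) := by simp [hRdef, hh]
  have hRz : R z = H (Fin.cons z (Y z)) + ∑ l, ⟪u l x, Y x l - Y z l⟫ := rfl
  rw [hRx, hRz] at hz
  linarith

end FirstSlot

theorem cyc_iterate_apply {n : ℕ} {α : Type*} (x : Fin n → α) (k : ℕ) (i : Fin n) :
    cyc^[k] x i = x ⟨(i.1 + k) % n, Nat.mod_lt _ i.pos⟩ := by
  induction k generalizing i with
  | zero => simp [Nat.mod_eq_of_lt i.2]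
  | succ k ih =>
    rw [iterate_succ_apply', cyc, ih]
    congr 2
    simp only [Nat.mod_add_mod]
    congr 1
    ring

theorem cyc_iterate_update {n : ℕ} {α : Type*} (x : Fin n → α) (k : ℕ) (i j : Fin n)
    (hij : (j.1 + k) % n = i.1) (w : α) :
    cyc^[k] (update x i w) = update (cyc^[k] x) j w := by
  ext m
  rw [cyc_iterate_apply]
  by_cases hm : m = j
  · subst hm
    simp [hij]
  · rw [update_of_ne hm, update_of_ne, cyc_iterate_apply]
    intro h
    refine hm (Fin.ext ?_)
    have h' : (m.1 + k) % n = (j.1 + k) % n := (congrArg Fin.val h).trans hij.symm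
    have h2 : m.1 ≡ j.1 [MOD n] := Nat.ModEq.add_right_cancel' k h'
    rwa [Nat.ModEq, Nat.mod_eq_of_lt m.2, Nat.mod_eq_of_lt j.2] at h2

section Orbit

variable {d N : ℕ} {S : Euc d → Euc d}

/-- The orbit segment `(x, Sx, …, S^N x)`. -/
def orbit (N : ℕ) (S : Euc d → Euc d) (x : Euc d) : Fin (N + 1) → Euc d := fun i => S^[i.1] x

/-- The tail `(Sx, …, S^N x)` of the orbit segment. -/
def orbitTail (N : ℕ) (S : Euc d → Euc d) (x : Euc d) : Fin N → Euc d := fun l => S^[l.1 + 1] x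

theorem orbit_eq_cons (x : Euc d) : orbit N S x = Fin.cons x (orbitTail N S x) := by
  ext1 i
  refine Fin.cases ?_ (fun l => ?_) i <;> simp [orbit, orbitTail]

theorem update_orbit_zero (x w : Euc d) :
    update (orbit N S x) 0 w = Fin.cons w (orbitTail N S x) := by
  rw [orbit_eq_cons, Fin.update_cons_zero]

theorem update_orbit_succ (x w : Euc d) (l : Fin N) :
    update (orbit N S x) l.succ w = Fin.cons x (update (orbitTail N S x) l w) := by
  rw [orbit_eq_cons, Fin.cons_update]

theorem cyc_iterate_orbit {x : Euc d} (hx : S^[N + 1] x = x) (k : ℕ) :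
    cyc^[k] (orbit N S x) = orbit N S (S^[k] x) := by
  ext1 i
  rw [cyc_iterate_apply]
  have hp : IsPeriodicPt S (N + 1) x := hx
  simp only [orbit]
  rw [hp.iterate_mod_apply, iterate_add_apply]

variable {H : (Fin (N + 1) → Euc d) → ℝ} {u : Fin N → Euc d → Euc d}

/-- A touching affine minorant in each slot other than the first. -/
theorem IsSubgradientAt.exists_affine_minorant {z : Euc d}
    (hz : IsSubgradientAt H (orbitTail N S) u z) (l : Fin N) :
    ∃ p : Euc d →L[ℝ] ℝ, ∀ w, H (orbit N S z) + p (w - S^[l.1 + 1] z) ≤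
      H (update (orbit N S z) l.succ w) := by
  refine ⟨innerSL ℝ (u l z), fun w => ?_⟩
  have h := hz (update (orbitTail N S z) l w)
  rw [← update_orbit_succ, ← orbit_eq_cons, Finset.sum_eq_single l] at h
  · simpa [orbitTail] using h
  · intro m _ hm
    simp [update_of_ne hm]
  · simp

/-- Along an orbit maximizing the cyclic sum, differentiability in the first slot along the whole
orbit forces differentiability in every slot. -/
theorem differentiableAt_slot_of_first {Ω : Set (Euc d)} (hΩ : IsOpen Ω)
    (hsub : SubAnti (closure Ω) H) {x : Euc d} (hx : S^[N + 1] x = x)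
    (hmem : ∀ k, S^[k] x ∈ Ω)
    (hgrad : ∀ k, IsSubgradientAt H (orbitTail N S) u (S^[k] x))
    (hfirst : ∀ k, DifferentiableAt ℝ
      (fun w => H (Fin.cons w (orbitTail N S (S^[k] x)))) (S^[k] x))
    (hzero : ∑ k : Fin (N + 1), H (cyc^[k.1] (orbit N S x)) = 0) (i : Fin (N + 1)) :
    DifferentiableAt ℝ (fun w => H (update (orbit N S x) i w)) (S^[i.1] x) := by
  rcases eq_or_ne i 0 with rfl | hi
  · simpa [update_orbit_zero] using hfirst 0
  set w₀ := S^[i.1] x with hw₀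
  set h : Fin (N + 1) → Euc d → ℝ := fun k w => H (cyc^[k.1] (update (orbit N S x) i w)) with hh
  have hself : update (orbit N S x) i w₀ = orbit N S x := update_eq_self i _
  have hgi : DifferentiableAt ℝ (h i) w₀ := by
    have : h i = fun w => H (Fin.cons w (orbitTail N S (S^[i.1] x))) := by
      ext w
      simp only [hh]
      rw [cyc_iterate_update _ _ i 0 (by simp [Nat.mod_eq_of_lt i.2]), cyc_iterate_orbit hx, update_orbit_zero]
    rw [this]
    exact hfirst i
  have hmin : ∀ k ∈ Finset.univ.erase i, ∃ p : Euc d →L[ℝ] ℝ,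
      ∀ w, h k w₀ + p (w - w₀) ≤ h k w := by
    intro k hk
    have hki : k ≠ i := Finset.ne_of_mem_erase hk
    obtain ⟨j, hj⟩ : ∃ j : Fin (N + 1), (j.1 + k.1) % (N + 1) = i.1 :=
      ⟨i - k, by rw [← Fin.val_add, sub_add_cancel]⟩
    have hj0 : j ≠ 0 := by
      rintro rfl
      refine hki (Fin.ext ?_)
      simpa [Nat.mod_eq_of_lt k.2] using hj
    obtain ⟨l, rfl⟩ := Fin.exists_succ_eq.2 hj0
    obtain ⟨p, hp⟩ := (hgrad k).exists_affine_minorant l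
    refine ⟨p, fun w => ?_⟩
    have hpt : S^[l.1 + 1] (S^[k.1] x) = w₀ := by
      have hper : IsPeriodicPt S (N + 1) x := hx
      rw [← iterate_add_apply, hw₀, ← hj, hper.iterate_mod_apply]
      rfl
    have hk₀ : h k w₀ = H (orbit N S (S^[k.1] x)) := by
      simp only [hh]
      rw [hself, cyc_iterate_orbit hx]
    have hkw : h k w = H (update (orbit N S (S^[k.1] x)) l.succ w) := by
      simp only [hh]
      rw [cyc_iterate_update _ _ i l.succ hj, cyc_iterate_orbit hx]
    rw [hk₀, hkw, ← hpt]
    exact hp w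
  choose! p hp using hmin
  have hsum : ∀ w, h i w + ∑ k ∈ Finset.univ.erase i, h k w = ∑ k, h k w := fun w =>
    Finset.add_sum_erase _ (fun k => h k w) (Finset.mem_univ i)
  have hmax : IsLocalMax (fun w => h i w + ∑ k ∈ Finset.univ.erase i, h k w) w₀ := by
    filter_upwards [hΩ.mem_nhds (hmem i)] with w hw
    rw [hsum, hsum]
    have h0 : ∑ k, h k w₀ = 0 := by simpa only [hh, hself] using hzero
    rw [h0]
    refine hsub.1 _ fun m => subset_closure ?_
    rcases eq_or_ne m i with rfl | hm
    · simpa using hw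
    · simpa [update_of_ne hm, orbit] using hmem m
  have := differentiableAt_of_isLocalMax_sum hgi hp hmax (k := 0) (by simp [hi.symm])
  simpa [hh] using this

end Orbit

/-- The cyclic sum of `H` vanishes along almost every orbit. -/
theorem ae_sum_cyc_orbit_eq_zero {d N : ℕ} {Ω : Set (Euc d)} (hΩb : Bornology.IsBounded Ω)
    {μ : Measure (Euc d)} [IsProbabilityMeasure μ] (hμΩ : ∀ᵐ x ∂μ, x ∈ Ω)
    {S : Euc d → Euc d} (hS : MeasurePreserving S μ μ)
    (hSinv : ∀ᵐ x ∂μ, S^[N + 1] x = x) {H : (Fin (N + 1) → Euc d) → ℝ} (hH : Continuous H)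
    (hsub : SubAnti (closure Ω) H) (hint : ∫ x, H (orbit N S x) ∂μ = 0) :
    ∀ᵐ x ∂μ, ∑ k : Fin (N + 1), H (cyc^[k.1] (orbit N S x)) = 0 := by
  have hmem : ∀ᵐ x ∂μ, ∀ k, S^[k] x ∈ Ω :=
    ae_all_iff.2 fun k => (hS.iterate k).quasiMeasurePreserving.ae hμΩ
  have hmeas : Measurable (orbit N S) :=
    measurable_pi_lambda _ fun i => hS.measurable.iterate i.1
  obtain ⟨M, hM⟩ : ∃ M, ∀ y ∈ Set.pi univ fun _ : Fin (N + 1) => closure Ω, ‖H y‖ ≤ M :=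
    (isCompact_univ_pi fun _ => hΩb.isCompact_closure).exists_bound_of_continuousOn
      hH.continuousOn
  have hi : Integrable (fun x => H (orbit N S x)) μ := by
    refine Integrable.of_bound (hH.measurable.comp hmeas).aestronglyMeasurable M ?_
    filter_upwards [hmem] with x hx
    exact hM _ fun i _ => subset_closure (hx i)
  have hik : ∀ k : ℕ, Integrable (fun x => H (orbit N S (S^[k] x))) μ := fun k =>
    (hS.iterate k).integrable_comp_of_integrable hi
  have hikn : ∀ k : ℕ, Integrable (fun x => -H (orbit N S (S^[k] x))) μ := fun k => (hik k).neg
  have hsum0 : ∫ x, ∑ k : Fin (N + 1), -H (orbit N S (S^[k.1] x)) ∂μ = 0 := by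
    rw [integral_finsetSum _ fun k _ => hikn k.1]
    refine Finset.sum_eq_zero fun k _ => ?_
    rw [integral_neg, neg_eq_zero]
    have hmap := (hS.iterate k.1).map_eq
    have := integral_map (hS.iterate k.1).measurable.aemeasurable (μ := μ)
      (f := fun x => H (orbit N S x)) (by
        rw [hmap]
        exact (hH.measurable.comp hmeas).aestronglyMeasurable)
    rw [← this, hmap, hint]
  have hnn : 0 ≤ᵐ[μ] fun x => ∑ k : Fin (N + 1), -H (orbit N S (S^[k.1] x)) := by
    filter_upwards [hmem, hSinv] with x hx hxp
    have h1 := hsub.1 (orbit N S x) fun i => subset_closure (hx i)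
    simp only [cyc_iterate_orbit hxp] at h1
    simp only [Pi.zero_apply, Finset.sum_neg_distrib]
    linarith
  have hz := (integral_eq_zero_iff_of_nonneg_ae hnn
    (integrable_finsetSum _ fun k _ => hikn k.1)).1 hsum0
  filter_upwards [hz, hSinv] with x hx hxp
  simp only [cyc_iterate_orbit hxp]
  simpa [Finset.sum_neg_distrib] using hx

/-- Differentiability in the first slot along almost every orbit. -/
theorem ae_differentiableAt_first {d N : ℕ} {Ω : Set (Euc d)} (hΩo : IsOpen Ω)
    (hΩb : Bornology.IsBounded Ω) {μ : Measure (Euc d)} (hμΩ : ∀ᵐ x ∂μ, x ∈ Ω)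
    (hac : μ ≪ volume) {S : Euc d → Euc d} (hS : MeasurePreserving S μ μ)
    {H : (Fin (N + 1) → Euc d) → ℝ} {C : NNReal} (hH : LipschitzWith C H)
    (hccv : ConcaveFirst H) {u : Fin N → Euc d → Euc d}
    (hgrad : ∀ᵐ x ∂μ, IsSubgradientAt H (orbitTail N S) u x)
    (hreg : MemW11loc Ω S ∨ ∀ l, MemW11loc Ω (u l)) :
    ∀ᵐ x ∂μ, DifferentiableAt ℝ (fun w => H (Fin.cons w (orbitTail N S x))) x := by
  have hmem : ∀ᵐ x ∂μ, ∀ k, S^[k] x ∈ Ω :=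
    ae_all_iff.2 fun k => (hS.iterate k).quasiMeasurePreserving.ae hμΩ
  suffices hcover : ∃ B : (Fin (N + 1) → ℕ × ℕ) → Set (Euc d),
      (∀ κ, ∀ᵐ x, x ∈ B κ → DifferentiableAt ℝ (fun w => H (Fin.cons w (orbitTail N S x))) x) ∧
      ∀ᵐ x ∂μ, ∃ κ, x ∈ B κ by
    obtain ⟨B, hB, hcov⟩ := hcover
    filter_upwards [hac.ae_le (ae_all_iff.2 hB), hcov] with x hx hκ
    obtain ⟨κ, hκ⟩ := hκ
    exact hx κ hκ
  rcases hreg with hreg | hreg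
  · obtain ⟨A, hA, hcov⟩ := hreg.exists_lipschitzOnWith_cover hΩo
    have hcovμ : ∀ᵐ x ∂μ, ∃ k, x ∈ A k := by
      filter_upwards [hac.ae_le hcov, hμΩ] with x hx hxΩ
      exact hx hxΩ
    have hcovS : ∀ᵐ x ∂μ, ∀ i : Fin (N + 1), ∃ k, S^[i.1] x ∈ A k :=
      ae_all_iff.2 fun i => (hS.iterate i.1).quasiMeasurePreserving.ae hcovμ
    refine ⟨fun κ => {x | IsSubgradientAt H (orbitTail N S) u x ∧
      ∀ i : Fin (N + 1), S^[i.1] x ∈ A (κ i)}, fun κ => ?_, ?_⟩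
    · refine ae_differentiableAt_first_of_lipschitz_tail hH hccv (fun z hz => hz.1) ?_
      have hit : ∀ m ≤ N + 1, ∃ C : NNReal, LipschitzOnWith C S^[m]
          {x | IsSubgradientAt H (orbitTail N S) u x ∧
            ∀ i : Fin (N + 1), S^[i.1] x ∈ A (κ i)} := by
        intro m
        induction m with
        | zero => exact fun _ => ⟨1, LipschitzWith.id.lipschitzOnWith⟩
        | succ m ih =>
          intro hm
          obtain ⟨C₁, hC₁⟩ := ih (by omega)
          obtain ⟨C₂, hC₂⟩ := hA (κ ⟨m, by omega⟩)
          refine ⟨C₂ * C₁, ?_⟩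
          rw [iterate_succ']
          exact hC₂.comp hC₁ fun x hx => hx.2 ⟨m, by omega⟩
      exact fun l => hit (l.1 + 1) (by omega)
    · filter_upwards [hgrad, hcovS] with x hx hκ
      choose κ hκ using hκ
      exact ⟨κ, hx, hκ⟩
  · choose A hA hcov using fun l => (hreg l).exists_lipschitzOnWith_cover hΩo
    obtain ⟨M, hM⟩ := hΩb.exists_norm_le
    refine ⟨fun κ => {x | IsSubgradientAt H (orbitTail N S) u x ∧ (∀ k, S^[k] x ∈ Ω) ∧
      ∀ l : Fin N, x ∈ A l (κ l.succ)}, fun κ => ?_, ?_⟩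
    · refine ae_differentiableAt_first_of_lipschitz_subgradient hH hccv (fun z hz => hz.1)
        (M := M) (fun z hz l => hM _ (hz.2.1 _)) fun l => ?_
      obtain ⟨C, hC⟩ := hA l (κ l.succ)
      exact ⟨C, hC.mono fun x hx => hx.2.2 l⟩
    · filter_upwards [hgrad, hmem, hac.ae_le (ae_all_iff.2 hcov)] with x hx hxm hκ
      choose κ hκ using fun l => hκ l (hxm 0)
      exact ⟨Fin.cons (0, 0) κ, hx, hxm, fun l => by simpa using hκ l⟩

theorem ae_differentiability_along_orbit {d N : ℕ} (hN : 1 ≤ N) (Ω : Set (Euc d))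
    (hΩo : IsOpen Ω) (hΩn : Ω.Nonempty) (hΩb : Bornology.IsBounded Ω)
    (hΩconn : IsConnected Ω)
    (μ : Measure (Euc d)) [IsProbabilityMeasure μ] (hμΩ : μ Ωᶜ = 0)
    (hac : μ ≪ volume)
    (S : Euc d → Euc d) (hSmeas : Measurable S)
    (hSΩ : ∀ x ∈ closure Ω, S x ∈ closure Ω)
    (hSpres : μ.map S = μ) (hSinv : ∀ᵐ x ∂μ, S^[N + 1] x = x)
    (H : (Fin (N + 1) → Euc d) → ℝ)
    (hHLip : ∃ C : NNReal, LipschitzWith C H)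
    (hHccv : ConcaveFirst H) (hHcvx : ConvexTail H)
    (hHsub : SubAnti (closure Ω) H)
    (hint : ∫ x, H (fun i : Fin (N + 1) => S^[i.1] x) ∂μ = 0)
    (u : Fin N → Euc d → Euc d)
    (hsubdiff : ∀ᵐ x ∂μ, ∀ Y : Fin N → Euc d,
      H (Fin.cons x Y) ≥ H (Fin.cons x fun l : Fin N => S^[l.1 + 1] x) +
        ∑ l : Fin N, ⟪u l x, Y l - S^[l.1 + 1] x⟫)
    (hreg : MemW11loc Ω S ∨ ∀ l, MemW11loc Ω (u l)) :
    ∃ Ω₀ : Set (Euc d), Ω₀ ⊆ Ω ∧ μ (Ω \ Ω₀) = 0 ∧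
      ∀ x ∈ Ω₀, ∀ i : Fin (N + 1),
        DifferentiableAt ℝ
          (fun w : Euc d => H (Function.update (fun j : Fin (N + 1) => S^[j.1] x) i w))
          (S^[i.1] x) := by
  obtain ⟨C, hC⟩ := hHLip
  have hS : MeasurePreserving S μ μ := ⟨hSmeas, hSpres⟩
  have hmemΩ : ∀ᵐ x ∂μ, x ∈ Ω := hμΩ
  have hgrad : ∀ᵐ x ∂μ, IsSubgradientAt H (orbitTail N S) u x := hsubdiff
  have hfirst := ae_differentiableAt_first hΩo hΩb hmemΩ hac hS hC hHccv hgrad hreg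
  have hzero := ae_sum_cyc_orbit_eq_zero hΩb hmemΩ hS hSinv hC.continuous hHsub hint
  have horb : ∀ᵐ x ∂μ, ∀ k, S^[k] x ∈ Ω ∧ IsSubgradientAt H (orbitTail N S) u (S^[k] x) ∧
      DifferentiableAt ℝ (fun w => H (Fin.cons w (orbitTail N S (S^[k] x)))) (S^[k] x) :=
    ae_all_iff.2 fun k =>
      (hS.iterate k).quasiMeasurePreserving.ae (hmemΩ.and (hgrad.and hfirst))
  have hall : ∀ᵐ x ∂μ, ∀ i : Fin (N + 1), DifferentiableAt ℝ
      (fun w : Euc d => H (Function.update (fun j : Fin (N + 1) => S^[j.1] x) i w))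
      (S^[i.1] x) := by
    filter_upwards [horb, hSinv, hzero] with x hx hxp hx0
    exact differentiableAt_slot_of_first hΩo hHsub hxp (fun k => (hx k).1)
      (fun k => (hx k).2.1) (fun k => (hx k).2.2) hx0
  refine ⟨Ω ∩ {x | ∀ i : Fin (N + 1), DifferentiableAt ℝ
      (fun w : Euc d => H (Function.update (fun j : Fin (N + 1) => S^[j.1] x) i w))
      (S^[i.1] x)}, inter_subset_left, ?_, fun x hx => hx.2⟩
  refine measure_mono_null (fun x hx => ?_) (ae_iff.1 hall)
  exact fun h => hx.2 ⟨hx.1, h⟩
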